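/- For any fixed x ∈ ℝ, the edge process N^n_{O,t} := O_{[⌊nt⌋/n, t]}(x) satisfies that n^{(1/2)(1 + 1/α)} N^n_{O,t} converges to zero in probability uniformly over compact time intervals as n → ∞. -/

import Mathlib

open MeasureTheory ProbabilityTheory Filter Topology UniformConvergence

noncomputable section

/-- A symmetric pure-jump `α`-stable Lévy process `X` with `α ∈ (1,2)`, scale `σ > 0`,
defined on a filtered probability space, together with its local time `L`.
`L a b x` is the local time of `X` at level `x` over the time interval `[a,b]`, defined
via the occupation density formula. -/
structure StableLevy (Ω : Type) [mΩ : MeasurableSpace Ω] where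
  P : Measure Ω
  isProb : IsProbabilityMeasure P
  Filt : Filtration ℝ mΩ
  α : ℝ
  σ : ℝ
  hα : α ∈ Set.Ioo (1 : ℝ) 2
  hσ : 0 < σ
  X : ℝ → Ω → ℝ
  measX : ∀ t : ℝ, Measurable (X t)
  adaptedX : ∀ t : ℝ, Measurable[Filt t] (X t)
  X0 : ∀ᵐ ω ∂P, X 0 ω = 0
  charFun : ∀ t : ℝ, 0 ≤ t → ∀ ξ : ℝ,
    ∫ ω, Complex.exp (Complex.I * (ξ : ℂ) * (X t ω : ℂ)) ∂P
      = (Real.exp (-(σ * t * |ξ| ^ α)) : ℂ)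
  statIncr : ∀ s t : ℝ, 0 ≤ s → s ≤ t →
    P.map (fun ω => X t ω - X s ω) = P.map (X (t - s))
  indepIncr : ∀ s t : ℝ, 0 ≤ s → s ≤ t →
    Indep (MeasurableSpace.comap (fun ω => X t ω - X s ω) inferInstance) (Filt s) P
  L : ℝ → ℝ → ℝ → Ω → ℝ
  measL : ∀ a b x : ℝ, Measurable (L a b x)
  occDensity : ∀ a b : ℝ, 0 ≤ a → a ≤ b → ∀ x : ℝ, ∀ᵐ ω ∂P,
    (∫ s in a..b, Set.indicator (Set.Ioi x) (fun _ => (1 : ℝ)) (X s ω))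
      = ∫ y in Set.Ioi x, L a b y ω

namespace StableLevy

variable {Ω : Type} [mΩ : MeasurableSpace Ω]

/-- The occupation time `O_{[a,b]}(x) = ∫_a^b 1_{(x,∞)}(X_s) ds`. -/
def occ (S : StableLevy Ω) (a b x : ℝ) (ω : Ω) : ℝ :=
  ∫ s in a..b, Set.indicator (Set.Ioi x) (fun _ => (1 : ℝ)) (S.X s ω)

/-- The σ-algebra `A_n = σ(X_{i/n} ; i ∈ ℕ)` generated by the discrete observations. -/
def An (S : StableLevy Ω) (n : ℕ) : MeasurableSpace Ω :=
  ⨆ i : ℕ, MeasurableSpace.comap (S.X ((i : ℝ) / n)) inferInstance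

/-- The σ-algebra generated by `X_1`. -/
def sigmaX1 (S : StableLevy Ω) : MeasurableSpace Ω :=
  MeasurableSpace.comap (S.X 1) inferInstance

/-- The first passage time of `X` over the level `q` (real-valued, with the usual
`sInf` junk value on the empty set). -/
def tau (S : StableLevy Ω) (q : ℝ) (ω : Ω) : ℝ :=
  sInf {t : ℝ | 0 ≤ t ∧ q < S.X t ω}

end StableLevy


/-- the edge process `N^n_{O,t} = O_{[⌊nt⌋/n, t]}(x)` satisfies that
`n^{(1/2)(1+1/α)} N^n_{O,t}` converges to zero in probability uniformly over compact
time intervals. -/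
theorem edge_process_occupation_time {Ω : Type} [mΩ : MeasurableSpace Ω]
    (S : StableLevy Ω) (x : ℝ) :
    ∀ T : ℝ, 0 < T → ∀ ε : ℝ, 0 < ε →
      Tendsto (fun n : ℕ =>
          S.P {ω | ε ≤ ⨆ t ∈ Set.Icc (0 : ℝ) T,
            (n : ℝ) ^ ((1 / 2 : ℝ) * (1 + 1 / S.α)) *
              |S.occ ((⌊(n : ℝ) * t⌋₊ : ℝ) / n) t x ω|})
        atTop (𝓝 0) := by
  intro T hT ε hε
  obtain ⟨h1, h2⟩ := S.hα
  have hocc : ∀ a b : ℝ, ∀ ω, |S.occ a b x ω| ≤ |b - a| := by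
    intro a b ω
    have := intervalIntegral.norm_integral_le_of_norm_le_const (a := a) (b := b) (C := 1)
      (f := fun s => Set.indicator (Set.Ioi x) (fun _ => (1 : ℝ)) (S.X s ω)) (by
        intro s _
        by_cases h : S.X s ω ∈ Set.Ioi x
        · simp [Set.indicator_of_mem h]
        · simp [Set.indicator_of_notMem h])
    simpa [StableLevy.occ] using this
  have hexp : (1 / 2 : ℝ) * (1 + 1 / S.α) - 1 < 0 := by
    have : 1 / S.α < 1 := by rw [div_lt_one (by linarith)]; exact h1
    linarith
  have hlim : Tendsto (fun n : ℕ => (n : ℝ) ^ ((1 / 2 : ℝ) * (1 + 1 / S.α) - 1)) atTop (𝓝 0) := by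
    have := (tendsto_rpow_neg_atTop (y := -((1 / 2 : ℝ) * (1 + 1 / S.α) - 1))
      (by linarith)).comp tendsto_natCast_atTop_atTop
    simpa only [neg_neg, Function.comp_def] using this
  apply tendsto_const_nhds.congr'
  filter_upwards [hlim.eventually (gt_mem_nhds hε), eventually_gt_atTop 0] with n hn hn0
  have hnR : (0 : ℝ) < n := by exact_mod_cast hn0
  symm
  convert measure_empty (μ := S.P)
  rw [Set.eq_empty_iff_forall_notMem]
  intro ω hω
  refine absurd (le_trans (Set.mem_setOf_eq ▸ hω) ?_) (not_le.mpr hn)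
  have hpos : (0 : ℝ) ≤ (n : ℝ) ^ ((1 / 2 : ℝ) * (1 + 1 / S.α) - 1) := Real.rpow_nonneg hnR.le _
  refine Real.iSup_le (fun t => Real.iSup_le (fun ht => ?_) hpos) hpos
  have hb : |S.occ ((⌊(n : ℝ) * t⌋₊ : ℝ) / n) t x ω| ≤ 1 / n := by
    refine (hocc _ _ ω).trans ?_
    have ha := Nat.floor_le (mul_nonneg hnR.le ht.1)
    have hc := (Nat.lt_floor_add_one ((n : ℝ) * t)).le
    have e : t - (⌊(n : ℝ) * t⌋₊ : ℝ) / n = (n * t - ⌊(n : ℝ) * t⌋₊) / n := by field_simp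
    rw [e, abs_of_nonneg (div_nonneg (by linarith) hnR.le)]
    exact div_le_div_of_nonneg_right (by linarith) hnR.le
  calc _ ≤ (n : ℝ) ^ ((1 / 2 : ℝ) * (1 + 1 / S.α)) * (1 / n) :=
        mul_le_mul_of_nonneg_left hb (Real.rpow_nonneg hnR.le _)
    _ = _ := by rw [Real.rpow_sub_one hnR.ne']; ring


end
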